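/- Let 1 < p ≤ 2 and let f = h + conj(g) be a complex-valued harmonic function on the unit disk (h, g analytic, g(0) = 0) belonging to the harmonic Hardy space h^p. Then for all real t, ∫_{-1}^{1} |f(x e^{it})|^p dx ≤ (1/2) sec^p(π/(2p)) ∫₀^{2π} |f(e^{iθ})|^p dθ, where f(e^{iθ}) denotes the radial limit. -/

import Mathlib

open Complex MeasureTheory Real Filter

theorem Differentiable.fejer_riesz_sq {G : ℂ → ℂ} (hG : Differentiable ℂ G) :
    (∫ x in (-1:ℝ)..1, ‖G x‖ ^ 2) ≤
      1 / 2 * ∫ θ in (0:ℝ)..(2 * π), ‖G (Complex.exp (θ * Complex.I))‖ ^ 2 := by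
  set K : ℂ → ℂ := fun z => G z * starRingEnd ℂ (G (starRingEnd ℂ z)) with hK
  have hKd : Differentiable ℂ K := by
    refine hG.mul ?_
    intro z
    have := (hG (starRingEnd ℂ z)).conj_conj
    simpa [Function.comp_def] using this
  obtain ⟨Q, hQ⟩ := (hKd.differentiableOn (s := Metric.ball 0 2)).isExactOn_ball
  have hKc := hKd.continuous
  have hGc := hG.continuous
  have h1 : (∫ x in (-1:ℝ)..1, K x) = Q 1 - Q (-1) := by
    have := intervalIntegral.integral_eq_sub_of_hasDerivAt (a := -1) (b := 1)
      (f := fun x : ℝ => Q x) (f' := fun x : ℝ => K x) (fun x hx => ?_)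
      ((hKc.comp Complex.continuous_ofReal).intervalIntegrable _ _)
    · simpa using this
    · rw [Set.uIcc_of_le (by norm_num)] at hx
      refine HasDerivAt.comp_ofReal (hQ _ ?_)
      rw [mem_ball_zero_iff, Complex.norm_real, Real.norm_eq_abs]
      exact lt_of_le_of_lt (abs_le.2 ⟨hx.1, hx.2⟩) (by norm_num)
  have h2 : (∫ θ in (0:ℝ)..π, K (Complex.exp (θ * Complex.I)) *
      (Complex.exp (θ * Complex.I) * Complex.I)) = Q (-1) - Q 1 := by
    have := intervalIntegral.integral_eq_sub_of_hasDerivAt (a := 0) (b := π)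
      (f := fun θ : ℝ => Q (Complex.exp (θ * Complex.I)))
      (f' := fun θ : ℝ => K (Complex.exp (θ * Complex.I)) *
        (Complex.exp (θ * Complex.I) * Complex.I)) (fun x hx => ?_)
      (by apply Continuous.intervalIntegrable; fun_prop)
    · simpa using this
    · have he : HasDerivAt (fun z : ℂ => Complex.exp (z * Complex.I))
          (Complex.exp (x * Complex.I) * Complex.I) (x : ℂ) := by
        simpa using ((hasDerivAt_id (x : ℂ)).mul_const Complex.I).cexp
      have hq : HasDerivAt Q (K (Complex.exp (x * Complex.I))) (Complex.exp (x * Complex.I)) :=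
        hQ _ (by rw [mem_ball_zero_iff, Complex.norm_exp_ofReal_mul_I]; norm_num)
      exact (HasDerivAt.comp (x : ℂ) hq he).comp_ofReal
  have h3 : (∫ x in (-1:ℝ)..1, K x) = ((∫ x in (-1:ℝ)..1, ‖G x‖ ^ 2 : ℝ) : ℂ) := by
    rw [← intervalIntegral.integral_ofReal]
    congr 1 with x
    simp [hK, Complex.mul_conj, Complex.normSq_eq_norm_sq]
  have hconj (θ : ℝ) : starRingEnd ℂ (Complex.exp (θ * Complex.I)) =
      Complex.exp ((-θ : ℝ) * Complex.I) := by
    rw [← Complex.exp_conj]; simp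
  have hc1 : Continuous fun θ : ℝ => ‖G (Complex.exp (θ * Complex.I))‖ ^ 2 := by fun_prop
  have hc2 : Continuous fun θ : ℝ => ‖G (Complex.exp ((-θ : ℝ) * Complex.I))‖ ^ 2 := by fun_prop
  have h4 : ‖Q (-1) - Q 1‖ ≤ 1 / 2 * ((∫ θ in (0:ℝ)..π, ‖G (Complex.exp (θ * Complex.I))‖ ^ 2) +
      ∫ θ in (0:ℝ)..π, ‖G (Complex.exp ((-θ : ℝ) * Complex.I))‖ ^ 2) := by
    rw [← h2, ← intervalIntegral.integral_add (hc1.intervalIntegrable _ _)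
      (hc2.intervalIntegrable _ _), ← intervalIntegral.integral_const_mul]
    refine intervalIntegral.norm_integral_le_of_norm_le pi_pos.le
      (Eventually.of_forall fun θ _ => ?_) ?_
    · simp only [hK, hconj, norm_mul, Complex.norm_exp_ofReal_mul_I, Complex.norm_I,
        RCLike.norm_conj]
      nlinarith [sq_nonneg (‖G (Complex.exp (θ * Complex.I))‖ -
        ‖G (Complex.exp ((-θ : ℝ) * Complex.I))‖)]
    · exact ((hc1.add hc2).const_mul _).intervalIntegrable _ _
  have hper : Function.Periodic (fun θ : ℝ => ‖G (Complex.exp (θ * Complex.I))‖ ^ 2) (2 * π) := by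
    intro θ
    simp [add_mul, Complex.exp_add, Complex.exp_two_pi_mul_I]
  have h5 : (∫ θ in (0:ℝ)..π, ‖G (Complex.exp ((-θ : ℝ) * Complex.I))‖ ^ 2) =
      ∫ θ in (-π)..0, ‖G (Complex.exp (θ * Complex.I))‖ ^ 2 := by
    simpa using intervalIntegral.integral_comp_neg (a := 0) (b := π)
      (fun θ : ℝ => ‖G (Complex.exp (θ * Complex.I))‖ ^ 2)
  have h6 := hper.intervalIntegral_add_eq (-π) 0
  rw [show -π + 2 * π = π by ring, zero_add] at h6
  rw [h5, add_comm, intervalIntegral.integral_add_adjacent_intervals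
    (hc1.intervalIntegrable _ _) (hc1.intervalIntegrable _ _), h6] at h4
  refine le_trans ?_ h4
  rw [norm_sub_rev, ← h1, h3, Complex.norm_real]
  exact le_abs_self _

theorem exists_differentiable_re_approx {φ : ℂ → ℝ} (hφ : ContinuousOn φ (Metric.sphere 0 1))
    {δ : ℝ} (hδ : 0 < δ) :
    ∃ P : ℂ → ℂ, Differentiable ℂ P ∧ ∀ z ∈ Metric.sphere (0:ℂ) 1, |φ z - (P z).re| < δ := by
  have : Fact (0 < 2 * π) := ⟨by positivity⟩
  let e : AddCircle (2 * π) ≃ₜ Circle := AddCircle.homeomorphCircle'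
  have hφc : Continuous fun x : Circle => φ x :=
    hφ.comp_continuous continuous_subtype_val fun x => x.2
  let ψ : C(AddCircle (2 * π), ℂ) :=
    ⟨fun x => (φ (e x) : ℂ), Complex.continuous_ofReal.comp (hφc.comp e.continuous)⟩
  have hspan : ∀ f ∈ Submodule.span ℂ (Set.range (@fourier (2 * π))), ∀ c : ℂ,
      ∃ P : ℂ → ℂ, Differentiable ℂ P ∧ ∀ x, (c * f x).re = (P (e x)).re := by
    intro f hf
    induction hf using Submodule.span_induction with
    | mem f hf =>
      obtain ⟨n, rfl⟩ := hf
      intro c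
      have key (x) : (fourier n : C(AddCircle (2 * π), ℂ)) x = (e x : ℂ) ^ n := by
        induction x using QuotientAddGroup.induction_on with
        | H x =>
        rw [fourier_coe_apply]
        simp only [e, AddCircle.homeomorphCircle'_apply_mk, Circle.coe_exp, ← Complex.exp_int_mul]
        congr 1
        have : (π : ℂ) ≠ 0 := by exact_mod_cast pi_ne_zero
        push_cast
        field_simp
      obtain ⟨m, rfl | rfl⟩ := n.eq_nat_or_neg
      · refine ⟨fun z => c * z ^ m, by fun_prop, fun x => ?_⟩
        rw [key]; simp
      · refine ⟨fun z => starRingEnd ℂ c * z ^ m, by fun_prop, fun x => ?_⟩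
        rw [key, ← Complex.conj_re]
        simp [← Circle.coe_inv_eq_conj]
    | zero => exact fun c => ⟨fun _ => 0, by fun_prop, by simp⟩
    | add f g _ _ hf hg =>
      intro c
      obtain ⟨P, hP, hP'⟩ := hf c
      obtain ⟨R, hR, hR'⟩ := hg c
      exact ⟨fun z => P z + R z, hP.add hR, fun x => by simp [mul_add, ← hP', ← hR']⟩
    | smul a f _ hf =>
      intro c
      obtain ⟨P, hP, hP'⟩ := hf (c * a)
      exact ⟨P, hP, fun x => by rw [← hP', ContinuousMap.smul_apply, smul_eq_mul, mul_assoc]⟩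
  have hmem : ψ ∈ (Submodule.span ℂ (Set.range (@fourier (2 * π)))).topologicalClosure := by
    rw [span_fourier_closure_eq_top]; trivial
  obtain ⟨f, hf, hfψ⟩ := Metric.mem_closure_iff.1 hmem δ hδ
  obtain ⟨P, hP, hP'⟩ := hspan f hf 1
  refine ⟨P, hP, fun z hz => ?_⟩
  obtain ⟨x, hx⟩ := e.surjective ⟨z, hz⟩
  have h1 := hP' x
  have h2 := (ContinuousMap.dist_apply_le_dist x).trans_lt hfψ
  rw [dist_eq_norm] at h2
  have h3 := (Complex.abs_re_le_norm (ψ x - f x)).trans_lt h2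
  rw [one_mul] at h1
  rw [Complex.sub_re, h1, hx] at h3
  simpa [ψ, hx] using h3

theorem DiffContOnCl.fejer_riesz_rpow {E : Type*} [NormedAddCommGroup E] [NormedSpace ℂ E]
    {H : ℂ → E} (hH : DiffContOnCl ℂ H (Metric.ball 0 1)) {q : ℝ} (hq : 0 < q) :
    (∫ x in (-1:ℝ)..1, ‖H x‖ ^ q) ≤
      1 / 2 * ∫ θ in (0:ℝ)..(2 * π), ‖H (Complex.exp (θ * Complex.I))‖ ^ q := by
  have hHc : ContinuousOn H (Metric.closedBall 0 1) := hH.continuousOn_ball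
  have hsph : ContinuousOn H (Metric.sphere 0 1) := hHc.mono Metric.sphere_subset_closedBall
  have hcirc : Continuous fun θ : ℝ => H (Complex.exp (θ * Complex.I)) :=
    hsph.comp_continuous (by fun_prop) fun θ => by simp [Complex.norm_exp_ofReal_mul_I]
  have hseg : ContinuousOn (fun x : ℝ => H x) (Set.Icc (-1) 1) :=
    hHc.comp Complex.continuous_ofReal.continuousOn fun x hx => by
      simpa using abs_le.2 hx
  have key (ε : ℝ) (hε : 0 < ε) : (∫ x in (-1:ℝ)..1, ‖H x‖ ^ q) ≤
      1 / 2 * ∫ θ in (0:ℝ)..(2 * π),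
        (Real.exp ε * (‖H (Complex.exp (θ * Complex.I))‖ + ε)) ^ q := by
    obtain ⟨P, hP, hPa⟩ := exists_differentiable_re_approx
      (φ := fun z => Real.log (‖H z‖ + ε) + ε / 2)
      (by
        refine ContinuousOn.add (ContinuousOn.log (by fun_prop) fun z _ => ?_) continuousOn_const
        positivity) (half_pos hε)
    have hbd : ∀ z ∈ Metric.sphere (0:ℂ) 1, ‖H z‖ ≤ Real.exp (P z).re ∧
        Real.exp (P z).re ≤ Real.exp ε * (‖H z‖ + ε) := by
      intro z hz
      have h0 : 0 < ‖H z‖ + ε := by positivity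
      obtain ⟨h1, h2⟩ := abs_lt.1 (hPa z hz)
      constructor
      · calc ‖H z‖ ≤ ‖H z‖ + ε := by linarith
          _ = Real.exp (Real.log (‖H z‖ + ε)) := (Real.exp_log h0).symm
          _ ≤ _ := Real.exp_le_exp.2 (by linarith)
      · calc Real.exp (P z).re ≤ Real.exp (ε + Real.log (‖H z‖ + ε)) :=
              Real.exp_le_exp.2 (by linarith)
          _ = _ := by rw [Real.exp_add, Real.exp_log h0]
    have hin : ∀ z ∈ Metric.closedBall (0:ℂ) 1, ‖H z‖ ≤ Real.exp (P z).re := by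
      intro z hz
      have hd : DiffContOnCl ℂ (fun z => Complex.exp (-P z) • H z) (Metric.ball 0 1) :=
        (hP.neg.cexp.diffContOnCl).smul hH
      have := Complex.norm_le_of_forall_mem_frontier_norm_le (C := 1) Metric.isBounded_ball hd
        (fun w hw => ?_) (z := z) (by rwa [closure_ball _ one_ne_zero])
      · rw [norm_smul, Complex.norm_exp, Complex.neg_re, Real.exp_neg,
          inv_mul_le_iff₀ (Real.exp_pos _), mul_one] at this
        exact this
      · rw [frontier_ball _ one_ne_zero] at hw
        rw [norm_smul, Complex.norm_exp, Complex.neg_re, Real.exp_neg,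
          inv_mul_le_iff₀ (Real.exp_pos _), mul_one]
        exact (hbd w hw).1
    have hG : Differentiable ℂ fun z => Complex.exp ((q / 2 : ℝ) * P z) := by fun_prop
    have hGn (z : ℂ) : ‖Complex.exp ((q / 2 : ℝ) * P z)‖ ^ 2 = Real.exp (P z).re ^ q := by
      rw [Complex.norm_exp, Complex.re_ofReal_mul, ← Real.exp_nat_mul, ← Real.exp_mul]
      congr 1; push_cast; ring
    have hFR := hG.fejer_riesz_sq
    simp only [hGn] at hFR
    have hPc := hP.continuous
    calc (∫ x in (-1:ℝ)..1, ‖H x‖ ^ q) ≤ ∫ x in (-1:ℝ)..1, Real.exp (P x).re ^ q := by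
          refine intervalIntegral.integral_mono_on (by norm_num) ?_ ?_ fun x hx => ?_
          · apply ContinuousOn.intervalIntegrable
            rw [Set.uIcc_of_le (by norm_num)]
            exact hseg.norm.rpow_const fun _ _ => Or.inr hq.le
          · apply Continuous.intervalIntegrable
            exact Continuous.rpow_const (by fun_prop) fun _ => Or.inr hq.le
          · exact Real.rpow_le_rpow (norm_nonneg _) (hin _ (by simpa using abs_le.2 hx)) hq.le
      _ ≤ _ := hFR
      _ ≤ _ := by
          gcongr ?_ * ?_
          refine intervalIntegral.integral_mono_on two_pi_pos.le ?_ ?_ fun θ _ => ?_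
          · apply Continuous.intervalIntegrable
            exact Continuous.rpow_const (by fun_prop) fun _ => Or.inr hq.le
          · apply Continuous.intervalIntegrable
            exact (continuous_const.mul (hcirc.norm.add continuous_const)).rpow_const fun _ => Or.inr hq.le
          · exact Real.rpow_le_rpow (Real.exp_pos _).le
              (hbd _ (by simp [Complex.norm_exp_ofReal_mul_I])).2 hq.le
  have hlim : Tendsto (fun ε : ℝ => 1 / 2 * ∫ θ in (0:ℝ)..(2 * π),
        (Real.exp ε * (‖H (Complex.exp (θ * Complex.I))‖ + ε)) ^ q) (nhdsWithin 0 (Set.Ioi 0))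
      (nhds (1 / 2 * ∫ θ in (0:ℝ)..(2 * π),
        (Real.exp 0 * (‖H (Complex.exp (θ * Complex.I))‖ + 0)) ^ q)) := by
    refine Tendsto.mono_left (Continuous.tendsto ?_ 0) nhdsWithin_le_nhds
    refine continuous_const.mul
      (intervalIntegral.continuous_parametric_intervalIntegral_of_continuous' ?_ _ _)
    exact ((Real.continuous_exp.comp continuous_fst).mul
      ((hcirc.comp continuous_snd).norm.add continuous_fst)).rpow_const fun _ => Or.inr hq.le
  have := ge_of_tendsto hlim (by filter_upwards [self_mem_nhdsWithin] with ε hε using key ε hε)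
  simpa using this

/-- The function `r e^{iθ} ↦ r ^ α cos (α θ)`, `-π < θ ≤ π`: the real part of the principal branch
of `ζ ↦ ζ ^ α`. -/
noncomputable def rePow (α : ℝ) (ζ : ℂ) : ℝ := ‖ζ‖ ^ α * Real.cos (α * ζ.arg)

theorem rePow_zero {α : ℝ} (hα : 0 < α) : rePow α 0 = 0 := by
  simp [rePow, Real.zero_rpow hα.ne']

theorem continuous_rePow {α : ℝ} (hα : 0 < α) : Continuous (rePow α) := by
  rw [continuous_iff_continuousAt]
  intro ζ
  have hn : Continuous fun z : ℂ => ‖z‖ ^ α := continuous_norm.rpow_const fun _ => Or.inr hα.le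
  by_cases hζ : ζ = 0
  · subst hζ
    unfold ContinuousAt
    rw [rePow_zero hα]
    refine squeeze_zero_norm (a := fun z : ℂ => ‖z‖ ^ α) (fun z => ?_) ?_
    · rw [rePow, norm_mul, Real.norm_of_nonneg (by positivity)]
      exact mul_le_of_le_one_right (by positivity) (Real.abs_cos_le_one _)
    · simpa [Real.zero_rpow hα.ne'] using hn.tendsto 0
  · have h1 : ContinuousAt (fun z : ℂ => InnerProductGeometry.angle (1 : ℂ) z) ζ :=
      ContinuousAt.comp (f := fun z : ℂ => ((1 : ℂ), z))
        (InnerProductGeometry.continuousAt_angle (x := ((1 : ℂ), ζ)) one_ne_zero hζ) (by fun_prop)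
    have h2 : ContinuousAt (fun z : ℂ => ‖z‖ ^ α *
        Real.cos (α * InnerProductGeometry.angle (1 : ℂ) z)) ζ :=
      hn.continuousAt.mul (Real.continuous_cos.continuousAt.comp (continuousAt_const.mul h1))
    refine h2.congr ?_
    filter_upwards [isOpen_ne.mem_nhds hζ] with z hz
    rw [Complex.angle_one_left hz, rePow, ← Real.cos_abs (α * z.arg), abs_mul, abs_of_pos hα]

theorem abs_arg_exp_le (L : ℂ) : |(Complex.exp L).arg| ≤ |L.im| := by
  rcases le_or_gt π |L.im| with h | h
  · exact (Complex.abs_arg_le_pi _).trans h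
  · obtain ⟨h1, h2⟩ := abs_lt.1 h
    have := congrArg Complex.im (Complex.log_exp h1 h2.le)
    rw [Complex.log_im] at this
    rw [this]

theorem re_exp_mul_le_rePow {α : ℝ} {L : ℂ} (hL : |α * L.im| ≤ π) :
    (Complex.exp (α * L)).re ≤ rePow α (Complex.exp L) := by
  rw [rePow, Complex.exp_re, Complex.norm_exp, ← Real.exp_mul, Complex.re_ofReal_mul,
    Complex.im_ofReal_mul, mul_comm L.re]
  gcongr ?_ * ?_
  rw [← Real.cos_abs (α * L.im), ← Real.cos_abs (α * Complex.arg _)]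
  refine Real.cos_le_cos_of_nonneg_of_le_pi (abs_nonneg _) hL ?_
  rw [abs_mul, abs_mul]
  exact mul_le_mul_of_nonneg_left (abs_arg_exp_le L) (abs_nonneg _)

theorem re_exp_mul_log_eq_rePow (α : ℝ) {ζ : ℂ} (hζ : ζ ≠ 0) :
    (Complex.exp (α * Complex.log ζ)).re = rePow α ζ := by
  rw [rePow, Complex.exp_re, Complex.re_ofReal_mul, Complex.im_ofReal_mul, Complex.log_re,
    Complex.log_im, Real.rpow_def_of_pos (norm_pos_iff.2 hζ), mul_comm α (Real.log _)]

theorem not_isLocalMax_norm (z : ℂ) : ¬ IsLocalMax (norm : ℂ → ℝ) z := by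
  intro h
  have h1 := Complex.eventually_eq_of_isLocalMax_norm (f := fun w : ℂ => w) (c := z)
    (Eventually.of_forall fun w => differentiableAt_id) h
  have h2 : ∀ᶠ w in nhdsWithin z {z}ᶜ, False := by
    filter_upwards [h1.filter_mono nhdsWithin_le_nhds, self_mem_nhdsWithin] with w hw hw'
    exact hw' hw
  rw [eventually_false_iff_eq_bot] at h2
  exact NeBot.ne inferInstance h2

/-- A holomorphic germ at `z₀` whose norm minorizes `‖k‖ ^ η * exp (rePow α ∘ k - re V)` and touches it at
`z₀`. -/
theorem exists_local_minorant {k V : ℂ → ℂ} {z₀ : ℂ} {α η : ℝ} (hα : 0 < α) (hα1 : α < 1)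
    (hk : ∀ᶠ z in nhds z₀, DifferentiableAt ℂ k z) (hV : Differentiable ℂ V) (hk0 : k z₀ ≠ 0) :
    ∃ N : ℂ → ℂ, (∀ᶠ z in nhds z₀, DifferentiableAt ℂ N z) ∧
      (∀ᶠ z in nhds z₀, ‖N z‖ ≤ ‖k z‖ ^ η * Real.exp (rePow α (k z) - (V z).re)) ∧
      ‖N z₀‖ = ‖k z₀‖ ^ η * Real.exp (rePow α (k z₀) - (V z₀).re) := by
  set L : ℂ → ℂ := fun z => Complex.log (k z₀) + Complex.log (k z / k z₀) with hL
  have hkc : ContinuousAt k z₀ := hk.self_of_nhds.continuousAt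
  have hslit : ∀ᶠ z in nhds z₀, k z / k z₀ ∈ Complex.slitPlane := by
    refine (hkc.div_const (k z₀)).eventually_mem (Complex.isOpen_slitPlane.mem_nhds ?_)
    rw [div_self hk0]; exact Complex.one_mem_slitPlane
  have hLd : ∀ᶠ z in nhds z₀, DifferentiableAt ℂ L z := by
    filter_upwards [hk, hslit] with z h1 h2
    exact (differentiableAt_const _).add ((h1.div_const _).clog h2)
  have hL0 : L z₀ = Complex.log (k z₀) := by simp [hL, div_self hk0]
  have hexp : ∀ᶠ z in nhds z₀, k z ≠ 0 ∧ Complex.exp (L z) = k z := by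
    filter_upwards [hslit] with z hz
    have h0 := Complex.slitPlane_ne_zero hz
    refine ⟨fun h => h0 (by simp [h]), ?_⟩
    rw [hL, Complex.exp_add, Complex.exp_log hk0, Complex.exp_log h0]
    field_simp
  have him : ∀ᶠ z in nhds z₀, |α * (L z).im| < π := by
    have hc : ContinuousAt (fun z => |α * (L z).im|) z₀ :=
      (continuousAt_const.mul
        (Complex.continuous_im.continuousAt.comp hLd.self_of_nhds.continuousAt)).abs
    refine hc.eventually_lt continuousAt_const ?_
    rw [hL0, Complex.log_im, abs_mul, abs_of_pos hα]
    nlinarith [Complex.abs_arg_le_pi (k z₀), pi_pos]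
  have hnorm (z : ℂ) (h0 : k z ≠ 0) (he : Complex.exp (L z) = k z) :
      ‖Complex.exp (η * L z + Complex.exp (α * L z) - V z)‖ =
        ‖k z‖ ^ η * Real.exp ((Complex.exp (α * L z)).re - (V z).re) := by
    rw [Complex.norm_exp, ← he, Complex.norm_exp, ← Real.exp_mul, ← Real.exp_add]
    congr 1
    rw [Complex.sub_re, Complex.add_re, Complex.re_ofReal_mul]
    ring
  refine ⟨fun z => Complex.exp (η * L z + Complex.exp (α * L z) - V z), ?_, ?_, ?_⟩
  · filter_upwards [hLd] with z hz
    have := hV z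
    fun_prop
  · filter_upwards [hexp, him] with z hz hz'
    rw [hnorm z hz.1 hz.2]
    gcongr
    have := re_exp_mul_le_rePow hz'.le
    rwa [hz.2] at this
  · rw [hnorm z₀ hk0 hexp.self_of_nhds.2, hL0, re_exp_mul_log_eq_rePow α hk0]

theorem DiffContOnCl.rePow_le_re_of_forall_sphere {k V : ℂ → ℂ} {α : ℝ} (hα : 0 < α) (hα1 : α < 1)
    (hk : DiffContOnCl ℂ k (Metric.ball 0 1)) (hV : Differentiable ℂ V)
    (hbd : ∀ z ∈ Metric.sphere (0:ℂ) 1, rePow α (k z) ≤ (V z).re)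
    {z : ℂ} (hz : z ∈ Metric.closedBall (0:ℂ) 1) (hkz : k z ≠ 0) :
    rePow α (k z) ≤ (V z).re := by
  have hkc : ContinuousOn k (Metric.closedBall 0 1) := hk.continuousOn_ball
  obtain ⟨C, hC⟩ := (isCompact_closedBall (0:ℂ) 1).exists_bound_of_continuousOn hkc
  have hC0 : 0 < C := (norm_pos_iff.2 hkz).trans_le (hC z hz)
  have main (η : ℝ) (hη : 0 < η) :
      ‖k z‖ ^ η * Real.exp (rePow α (k z) - (V z).re) ≤ C ^ η := by
    set w : ℂ → ℝ := fun z => ‖k z‖ ^ η * Real.exp (rePow α (k z) - (V z).re) with hw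
    have hwc : ContinuousOn w (Metric.closedBall 0 1) := by
      refine (hkc.norm.rpow_const fun _ _ => Or.inr hη.le).mul (Real.continuous_exp.comp_continuousOn
        (((continuous_rePow hα).comp_continuousOn hkc).sub
          (Complex.continuous_re.comp hV.continuous).continuousOn))
    obtain ⟨m, hm, hmax⟩ := (isCompact_closedBall (0:ℂ) 1).exists_isMaxOn ⟨z, hz⟩ hwc
    have hpos : 0 < w m := lt_of_lt_of_le
      (mul_pos (Real.rpow_pos_of_pos (norm_pos_iff.2 hkz) _) (Real.exp_pos _)) (hmax hz)
    have hcomp : IsCompact (Metric.closedBall (0:ℂ) 1 ∩ w ⁻¹' {w m}) :=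
      (isCompact_closedBall (0:ℂ) 1).of_isClosed_subset
        (hwc.preimage_isClosed_of_isClosed Metric.isClosed_closedBall isClosed_singleton)
        Set.inter_subset_left
    obtain ⟨z₀, ⟨hz₀, hwz₀⟩, hfar⟩ := hcomp.exists_isMaxOn ⟨m, hm, rfl⟩ continuous_norm.continuousOn
    have hwz₀ : w z₀ = w m := hwz₀
    refine le_trans (hmax hz) ?_
    change w m ≤ _
    rw [mem_closedBall_zero_iff] at hz₀
    rcases hz₀.eq_or_lt with h1 | h1
    · rw [← hwz₀]
      calc w z₀ ≤ C ^ η * 1 := by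
            refine mul_le_mul (Real.rpow_le_rpow (norm_nonneg _) (hC _ (by simpa using hz₀)) hη.le)
              ?_ (Real.exp_pos _).le (by positivity)
            rw [Real.exp_le_one_iff]
            linarith [hbd z₀ (by simpa using h1)]
        _ = _ := mul_one _
    · exfalso
      have hball : Metric.ball (0:ℂ) 1 ∈ nhds z₀ := Metric.isOpen_ball.mem_nhds (by simpa using h1)
      have hk0 : k z₀ ≠ 0 := by
        intro h0
        rw [← hwz₀, hw] at hpos
        simp [h0, Real.zero_rpow hη.ne'] at hpos
      obtain ⟨N, hN1, hN2, hN3⟩ := exists_local_minorant (k := k) (V := V) (z₀ := z₀) (η := η)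
        hα hα1 (by
          filter_upwards [hball] with y hy
          exact hk.differentiableAt Metric.isOpen_ball hy) hV hk0
      have hloc : IsLocalMax (norm ∘ N) z₀ := by
        filter_upwards [hN2, hball] with y hy hyb
        change ‖N y‖ ≤ ‖N z₀‖
        rw [hN3]
        exact hy.trans ((hmax (Metric.ball_subset_closedBall hyb)).trans hwz₀.ge)
      refine not_isLocalMax_norm z₀ ?_
      filter_upwards [Complex.eventually_eq_of_isLocalMax_norm hN1 hloc, hN2, hball]
        with y hy1 hy2 hyb
      have hyc := Metric.ball_subset_closedBall hyb
      refine hfar ⟨hyc, le_antisymm (hmax hyc) ?_⟩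
      rw [hy1, hN3] at hy2
      exact hwz₀.ge.trans hy2
  have hlog (η : ℝ) (hη : 0 < η) :
      rePow α (k z) + η * (Real.log ‖k z‖ - Real.log C) ≤ (V z).re := by
    have h1 := main η hη
    have h0 := norm_pos_iff.2 hkz
    rw [Real.rpow_def_of_pos h0, Real.rpow_def_of_pos hC0, ← Real.exp_add, Real.exp_le_exp] at h1
    linarith
  have hlim : Tendsto (fun η : ℝ => rePow α (k z) + η * (Real.log ‖k z‖ - Real.log C))
      (nhdsWithin 0 (Set.Ioi 0)) (nhds (rePow α (k z) + 0 * (Real.log ‖k z‖ - Real.log C))) :=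
    (Continuous.tendsto (by fun_prop) 0).mono_left nhdsWithin_le_nhds
  have := le_of_tendsto hlim (by filter_upwards [self_mem_nhdsWithin] with η hη using hlog η hη)
  simpa using this

/-- The mean over the unit circle of the subharmonic function `rePow α ∘ k` is at least its value
at the centre. -/
theorem DiffContOnCl.integral_rePow_nonneg {k : ℂ → ℂ} {α : ℝ} (hα : 0 < α) (hα1 : α < 1)
    (hk : DiffContOnCl ℂ k (Metric.ball 0 1)) (hk0 : k 0 = 0) :
    0 ≤ ∫ θ in (0:ℝ)..(2 * π), rePow α (k (Complex.exp (θ * Complex.I))) := by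
  have hkc : ContinuousOn k (Metric.closedBall 0 1) := hk.continuousOn_ball
  have hsph : ContinuousOn (fun z => rePow α (k z)) (Metric.sphere 0 1) :=
    (continuous_rePow hα).comp_continuousOn (hkc.mono Metric.sphere_subset_closedBall)
  have hmem (θ : ℝ) : Complex.exp (θ * Complex.I) ∈ Metric.sphere (0:ℂ) 1 := by
    simp [Complex.norm_exp_ofReal_mul_I]
  have hcirc : Continuous fun θ : ℝ => rePow α (k (Complex.exp (θ * Complex.I))) :=
    hsph.comp_continuous (by fun_prop) hmem
  have hball : Metric.ball (0:ℂ) 1 ∈ nhds 0 := Metric.ball_mem_nhds _ one_pos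
  have han : AnalyticOnNhd ℂ k (Metric.ball 0 1) :=
    hk.differentiableOn.analyticOnNhd Metric.isOpen_ball
  rcases (han 0 (by simp)).eventually_eq_zero_or_eventually_ne_zero with h | h
  · have h1 : Set.EqOn k 0 (Metric.ball 0 1) :=
      han.eqOn_zero_of_preconnected_of_eventuallyEq_zero
        (convex_ball _ _).isPreconnected (by simp) h
    have h2 : Set.EqOn k 0 (Metric.closedBall 0 1) := by
      refine h1.of_subset_closure hkc continuousOn_const Metric.ball_subset_closedBall ?_
      rw [closure_ball _ one_ne_zero]
    have h3 (θ : ℝ) : k (Complex.exp (θ * Complex.I)) = 0 :=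
      h2 (Metric.sphere_subset_closedBall (hmem θ))
    simp [h3, rePow_zero hα]
  refine le_of_forall_pos_le_add fun ε hε => ?_
  set δ := ε / (4 * π) with hδ
  have hδ0 : 0 < δ := by positivity
  obtain ⟨P, hP, hPa⟩ := exists_differentiable_re_approx hsph hδ0
  have h0 : 0 ≤ (P 0).re + δ := by
    have hV : Differentiable ℂ fun z => P z + (δ : ℂ) := by fun_prop
    have hle : ∀ᶠ z in nhdsWithin (0:ℂ) {0}ᶜ, rePow α (k z) ≤ (P z + (δ : ℂ)).re := by
      filter_upwards [h, nhdsWithin_le_nhds hball] with z hz hzb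
      refine hk.rePow_le_re_of_forall_sphere hα hα1 hV (fun y hy => ?_)
        (Metric.ball_subset_closedBall hzb) hz
      have := (abs_lt.1 (hPa y hy)).2
      simp only [Complex.add_re, Complex.ofReal_re]
      linarith
    have hc1 : Tendsto (fun z => rePow α (k z)) (nhdsWithin (0:ℂ) {0}ᶜ) (nhds (rePow α (k 0))) :=
      ((continuous_rePow hα).continuousAt.comp (han 0 (by simp)).continuousAt).tendsto.mono_left
        nhdsWithin_le_nhds
    have hc2 : Tendsto (fun z => (P z + (δ : ℂ)).re) (nhdsWithin (0:ℂ) {0}ᶜ)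
        (nhds (P 0 + (δ : ℂ)).re) :=
      ((Complex.continuous_re.comp hV.continuous).tendsto 0).mono_left nhdsWithin_le_nhds
    have := le_of_tendsto_of_tendsto hc1 hc2 hle
    simpa [hk0, rePow_zero hα] using this
  have hPc := hP.continuous
  have hmean : (∫ θ in (0:ℝ)..(2 * π), (P (Complex.exp (θ * Complex.I))).re) =
      2 * π * (P 0).re := by
    have h1 := DiffContOnCl.circleAverage (f := P) (c := 0) (R := 1) hP.diffContOnCl
    rw [Real.circleAverage_def] at h1
    simp only [circleMap, Complex.ofReal_one, one_mul, zero_add] at h1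
    have h2 := Complex.reCLM.intervalIntegral_comp_comm (a := 0) (b := 2 * π) (μ := volume)
      (f := fun θ : ℝ => P (Complex.exp (θ * Complex.I)))
      (Continuous.intervalIntegrable (by fun_prop) _ _)
    simp only [Complex.reCLM_apply] at h2
    rw [h2, ← h1, Complex.smul_re, smul_eq_mul, mul_inv_cancel_left₀ (by positivity)]
  have hmono : (∫ θ in (0:ℝ)..(2 * π), ((P (Complex.exp (θ * Complex.I))).re - δ)) ≤
      ∫ θ in (0:ℝ)..(2 * π), rePow α (k (Complex.exp (θ * Complex.I))) := by
    refine intervalIntegral.integral_mono_on two_pi_pos.le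
      (Continuous.intervalIntegrable (by fun_prop) _ _) (hcirc.intervalIntegrable _ _)
      fun θ _ => ?_
    linarith [(abs_lt.1 (hPa _ (hmem θ))).1]
  rw [intervalIntegral.integral_sub (Continuous.intervalIntegrable (by fun_prop) _ _)
    (continuous_const.intervalIntegrable _ _), hmean, intervalIntegral.integral_const,
    smul_eq_mul] at hmono
  have h4 : 4 * π * δ = ε := by rw [hδ]; field_simp
  nlinarith [pi_pos]

theorem sin_mul_mul_sin_le {κ u v : ℝ} (hκ : 0 ≤ κ) (hκ1 : κ ≤ 1) (hu : 0 ≤ u) (huv : u ≤ v)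
    (hv : v ≤ π / 2) : Real.sin (κ * u) * Real.sin v ≤ Real.sin (κ * v) * Real.sin u := by
  rcases hu.eq_or_lt with rfl | hu0
  · simp
  have hN : ∀ x ∈ Set.Icc 0 (π / 2),
      0 ≤ κ * Real.cos (κ * x) * Real.sin x - Real.sin (κ * x) * Real.cos x := by
    intro x hx
    have hd (y : ℝ) : HasDerivAt
        (fun x => κ * Real.cos (κ * x) * Real.sin x - Real.sin (κ * x) * Real.cos x)
        ((1 - κ ^ 2) * (Real.sin (κ * y) * Real.sin y)) y := by
      have h1 : HasDerivAt (fun x => κ * x) κ y := by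
        simpa using (hasDerivAt_id y).const_mul κ
      refine (((h1.cos.const_mul κ).mul (Real.hasDerivAt_sin y)).sub
        (h1.sin.mul (Real.hasDerivAt_cos y))).congr_deriv ?_
      ring
    have hm := monotoneOn_of_deriv_nonneg (convex_Icc 0 (π / 2))
      (fun y _ => (hd y).continuousAt.continuousWithinAt)
      (fun y _ => (hd y).differentiableAt.differentiableWithinAt) (fun y hy => by
        rw [interior_Icc] at hy
        rw [(hd y).deriv]
        have h2 := Real.sin_nonneg_of_nonneg_of_le_pi (mul_nonneg hκ hy.1.le)
          (by nlinarith [hy.1, hy.2])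
        have h3 := Real.sin_nonneg_of_nonneg_of_le_pi hy.1.le (by linarith [hy.2, pi_pos])
        exact mul_nonneg (by nlinarith) (mul_nonneg h2 h3))
    have := hm ⟨le_rfl, by positivity⟩ hx hx.1
    simpa using this
  have hpos : ∀ x ∈ Set.Icc u v, 0 < Real.sin x := fun x hx =>
    Real.sin_pos_of_pos_of_lt_pi (by linarith [hx.1]) (by linarith [hx.2, pi_pos])
  have hd : ∀ y ∈ Set.Icc u v, HasDerivAt (fun x => Real.sin (κ * x) / Real.sin x)
      ((κ * Real.cos (κ * y) * Real.sin y - Real.sin (κ * y) * Real.cos y) / Real.sin y ^ 2) y := by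
    intro y hy
    have h1 : HasDerivAt (fun x => κ * x) κ y := by
      simpa using (hasDerivAt_id y).const_mul κ
    refine (h1.sin.div (Real.hasDerivAt_sin y) (hpos y hy).ne').congr_deriv ?_
    ring
  have hm := monotoneOn_of_deriv_nonneg (convex_Icc u v)
    (fun y hy => (hd y hy).continuousAt.continuousWithinAt)
    (fun y hy => (hd y (interior_subset hy)).differentiableAt.differentiableWithinAt)
    (fun y hy => by
      have hy := interior_subset hy
      rw [(hd y hy).deriv]
      exact div_nonneg (hN y ⟨by linarith [hy.1], by linarith [hy.2]⟩) (sq_nonneg _))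
  have := hm ⟨le_rfl, huv⟩ ⟨huv, le_rfl⟩ huv
  rwa [div_le_div_iff₀ (hpos u ⟨le_rfl, huv⟩) (hpos v ⟨huv, le_rfl⟩)] at this

theorem cos_rpow_mul_le {q u : ℝ} (hq1 : 1 < q) (hq2 : q < 2) (hu : 0 ≤ u) (hu2 : u < π / 2) :
    Real.cos (π / (2 * q)) ^ q * (1 + Real.tan (π / (2 * q)) * Real.cos (q * u)) ≤
      Real.cos u ^ q := by
  set c := π / (2 * q) with hc
  have hqc : q * c = π / 2 := by rw [hc]; field_simp
  have hc0 : 0 < c := by positivity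
  have hc2 : c < π / 2 := by nlinarith
  have hcos {x : ℝ} (h0 : 0 ≤ x) (h1 : x < π / 2) : 0 < Real.cos x :=
    Real.cos_pos_of_mem_Ioo ⟨by linarith, h1⟩
  have hcc := hcos hc0.le hc2
  have hsc : Real.sin ((q - 1) * c) = Real.cos c := by
    rw [sub_mul, hqc, one_mul, Real.sin_pi_div_two_sub]
  set t := Real.tan c with ht
  have htc : t * Real.cos c = Real.sin c := Real.tan_mul_cos hcc.ne'
  set m : ℝ → ℝ := fun x => (1 + t * Real.cos (q * x)) * Real.cos x ^ (-q) with hm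
  have hd : ∀ y, 0 ≤ y → y < π / 2 → HasDerivAt m
      (q * Real.cos y ^ (-q - 1) * (Real.sin y - t * Real.sin ((q - 1) * y))) y := by
    intro y h0 h1
    have hy := hcos h0 h1
    have h2 : HasDerivAt (fun x => q * x) q y := by
      simpa using (hasDerivAt_id y).const_mul q
    refine (((h2.cos.const_mul t).const_add 1).mul
      ((Real.hasDerivAt_cos y).rpow_const (p := -q) (Or.inl hy.ne'))).congr_deriv ?_
    have h3 : Real.cos y ^ (-q) = Real.cos y ^ (-q - 1) * Real.cos y := by
      rw [← Real.rpow_add_one hy.ne']; ring_nf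
    rw [h3, sub_mul q 1 y, one_mul, Real.sin_sub]
    ring
  have hfac (y : ℝ) (h0 : 0 ≤ y) (h1 : y < π / 2) : 0 ≤ q * Real.cos y ^ (-q - 1) := by
    have := hcos h0 h1
    positivity
  have hmc : m c = (Real.cos c ^ q)⁻¹ := by
    rw [hm]
    simp only [hqc, Real.cos_pi_div_two, mul_zero, add_zero, one_mul]
    rw [Real.rpow_neg hcc.le]
  have hle : m u ≤ m c := by
    rcases le_total u c with huc | huc
    · have hmono := monotoneOn_of_deriv_nonneg (convex_Icc 0 c) (f := m)
        (fun y hy => (hd y hy.1 (hy.2.trans_lt hc2)).continuousAt.continuousWithinAt)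
        (fun y hy => (hd y (interior_subset hy).1
          ((interior_subset hy).2.trans_lt hc2)).differentiableAt.differentiableWithinAt)
        (fun y hy => by
          obtain ⟨h0, h1⟩ := interior_subset hy
          rw [(hd y h0 (h1.trans_lt hc2)).deriv]
          refine mul_nonneg (hfac y h0 (h1.trans_lt hc2)) (sub_nonneg.2 ?_)
          have := sin_mul_mul_sin_le (κ := q - 1) (by linarith) (by linarith) h0 h1 hc2.le
          rw [hsc, ← htc] at this
          exact le_of_mul_le_mul_right (by linarith) hcc)
      exact hmono ⟨hu, huc⟩ ⟨hc0.le, le_rfl⟩ huc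
    · have hanti := antitoneOn_of_deriv_nonpos (convex_Icc c u) (f := m)
        (fun y hy => (hd y (hc0.le.trans hy.1) (hy.2.trans_lt hu2)).continuousAt.continuousWithinAt)
        (fun y hy => (hd y (hc0.le.trans (interior_subset hy).1)
          ((interior_subset hy).2.trans_lt hu2)).differentiableAt.differentiableWithinAt)
        (fun y hy => by
          obtain ⟨h0, h1⟩ := interior_subset hy
          rw [(hd y (hc0.le.trans h0) (h1.trans_lt hu2)).deriv]
          refine mul_nonpos_of_nonneg_of_nonpos
            (hfac y (hc0.le.trans h0) (h1.trans_lt hu2)) (sub_nonpos.2 ?_)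
          have := sin_mul_mul_sin_le (κ := q - 1) (by linarith) (by linarith) hc0.le h0
            (h1.trans hu2.le)
          rw [hsc, ← htc] at this
          exact le_of_mul_le_mul_right (by linarith) hcc)
      exact hanti ⟨le_rfl, huc⟩ ⟨huc, le_rfl⟩ huc
  have hcu := hcos hu hu2
  rw [hmc, hm] at hle
  simp only [Real.rpow_neg hcu.le] at hle
  rw [← div_eq_mul_inv, ← one_div, div_le_div_iff₀ (by positivity) (by positivity)] at hle
  linarith

theorem two_mul_cos_sq_rpow_le {α : ℝ} (hα : 1 / 2 < α) (hα1 : α < 1) :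
    0 < 2 * Real.cos (π / (4 * α)) ^ 2 ∧
      (2 * Real.cos (π / (4 * α)) ^ 2) ^ α ≤ 2 ^ (α - 1) := by
  have hα0 : 0 < α := by linarith
  have hpos : 0 < Real.cos (π / (4 * α)) := by
    refine Real.cos_pos_of_mem_Ioo ⟨by linarith [pi_pos, show 0 < π / (4 * α) by positivity], ?_⟩
    rw [div_lt_div_iff₀ (by positivity) two_pos]
    nlinarith [pi_pos]
  refine ⟨by positivity, ?_⟩
  set y := (1 - α) / α with hy
  have hy0 : 0 ≤ y := div_nonneg (by linarith) hα0.le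
  have hy1 : y ≤ 1 := by rw [hy, div_le_one hα0]; linarith
  have hκ : 2 * Real.cos (π / (4 * α)) ^ 2 = 1 - Real.sin (π / 2 * y) := by
    rw [← neg_neg (Real.sin _), ← Real.cos_add_pi_div_two, Real.cos_sq]
    have : 2 * (π / (4 * α)) = π / 2 * y + π / 2 := by rw [hy]; field_simp; ring
    rw [this]; ring
  have hle : 2 * Real.cos (π / (4 * α)) ^ 2 ≤ Real.exp (-y) := by
    have h1 := Real.mul_le_sin (x := π / 2 * y) (by positivity) (by nlinarith [pi_pos])
    have h2 : 2 / π * (π / 2 * y) = y := by field_simp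
    have h3 := Real.add_one_le_exp (-y)
    linarith
  calc (2 * Real.cos (π / (4 * α)) ^ 2) ^ α ≤ Real.exp (-y) ^ α :=
        Real.rpow_le_rpow (by positivity) hle hα0.le
    _ = Real.exp (-(1 - α)) := by
        rw [← Real.exp_mul, hy]; congr 1; field_simp
    _ ≤ Real.exp (Real.log 2 * (α - 1)) := by
        rw [Real.exp_le_exp]
        nlinarith [Real.log_two_lt_d9]
    _ = 2 ^ (α - 1) := (Real.rpow_def_of_pos two_pos _).symm

theorem mul_add_rpow_sub_rpow_mono {α A b x : ℝ} (hα : 0 < α) (hα1 : α < 1)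
    (hA : 1 ≤ A * 2 ^ (α - 1)) (hA0 : 0 ≤ A) (hb : -1 ≤ b) (hb1 : b ≤ 1) (hx : 1 ≤ x) :
    A * (1 + b) ^ α - 1 ≤ A * (x + b) ^ α - x ^ α := by
  have hd : ∀ y, 1 < y → HasDerivAt (fun x => A * (x + b) ^ α - x ^ α)
      (α * (A * (y + b) ^ (α - 1) - y ^ (α - 1))) y := by
    intro y hy
    refine (((((hasDerivAt_id y).add_const b).rpow_const (p := α)
      (Or.inl (by simp only [id]; linarith))).const_mul A).sub
      ((hasDerivAt_id y).rpow_const (p := α) (Or.inl (by simp only [id]; linarith)))).congr_deriv ?_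
    simp only [id]
    ring
  have hc : Continuous fun x : ℝ => A * (x + b) ^ α - x ^ α :=
    (continuous_const.mul ((continuous_id.add continuous_const).rpow_const fun _ => Or.inr hα.le)).sub
      (continuous_id.rpow_const fun _ => Or.inr hα.le)
  have hm := monotoneOn_of_deriv_nonneg (convex_Ici 1) hc.continuousOn
    (fun y hy => by
      rw [interior_Ici] at hy
      exact (hd y hy).differentiableAt.differentiableWithinAt)
    (fun y hy => by
      rw [interior_Ici] at hy
      have hy : 1 < y := hy
      rw [(hd y hy).deriv]
      refine mul_nonneg hα.le (sub_nonneg.2 ?_)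
      calc y ^ (α - 1) = 1 * y ^ (α - 1) := (one_mul _).symm
        _ ≤ A * 2 ^ (α - 1) * y ^ (α - 1) := by gcongr
        _ = A * (2 * y) ^ (α - 1) := by
            rw [Real.mul_rpow two_pos.le (by linarith), mul_assoc]
        _ ≤ A * (y + b) ^ (α - 1) :=
            mul_le_mul_of_nonneg_left (Real.rpow_le_rpow_of_nonpos (by linarith) (by linarith)
              (by linarith)) hA0)
  simpa using hm (Set.mem_Ici.2 le_rfl) (Set.mem_Ici.2 hx) hx

/-- The plurisubharmonic minorant inequality behind Kalaj's theorem. -/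
theorem exists_norm_sq_add_norm_sq_rpow_le {q : ℝ} (hq1 : 1 < q) (hq2 : q < 2) :
    ∃ B : ℝ, 0 ≤ B ∧ ∀ z w : ℂ, (‖z‖ ^ 2 + ‖w‖ ^ 2) ^ (q / 2) ≤
      (2 * Real.cos (π / (2 * q)) ^ 2) ^ (-(q / 2)) * ‖z + starRingEnd ℂ w‖ ^ q -
        B * rePow (q / 2) (z * w) := by
  set α := q / 2 with hα
  have hα0 : 0 < α := by linarith
  obtain ⟨hκ0, hκ⟩ := two_mul_cos_sq_rpow_le (α := α) (by linarith) (by linarith)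
  have hc4 : π / (4 * α) = π / (2 * q) := by rw [hα]; congr 1; ring
  rw [hc4] at hκ0 hκ
  set c := π / (2 * q) with hc
  have hc0 : 0 < c := by positivity
  have hc2 : c < π / 2 := by
    rw [hc, div_lt_div_iff₀ (by positivity) two_pos]
    nlinarith [pi_pos]
  have hcc : 0 < Real.cos c := Real.cos_pos_of_mem_Ioo ⟨by linarith, hc2⟩
  have ht : 0 ≤ Real.tan c := Real.tan_nonneg_of_nonneg_of_le_pi_div_two hc0.le hc2.le
  set A := (2 * Real.cos c ^ 2) ^ (-α) with hA
  have hA0 : 0 < A := Real.rpow_pos_of_pos hκ0 _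
  have hAinv : A * (2 * Real.cos c ^ 2) ^ α = 1 := by
    rw [hA, ← Real.rpow_add hκ0]; simp
  have hA1 : 1 ≤ A * 2 ^ (α - 1) := hAinv.symm.le.trans (mul_le_mul_of_nonneg_left hκ hA0.le)
  have hAone : 1 ≤ A := by
    refine hA1.trans (mul_le_of_le_one_right hA0.le ?_)
    exact Real.rpow_le_one_of_one_le_of_nonpos one_le_two (by linarith)
  have hcirc : ∀ θ : ℝ, |θ| ≤ π → 1 + Real.tan c * Real.cos (α * θ) ≤ A * (1 + Real.cos θ) ^ α := by
    have hcl : IsClosed {θ : ℝ | 1 + Real.tan c * Real.cos (α * θ) ≤ A * (1 + Real.cos θ) ^ α} := by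
      refine isClosed_le (by fun_prop) (continuous_const.mul ?_)
      exact Continuous.rpow_const (by fun_prop) fun _ => Or.inr hα0.le
    have hsub : Set.Ioo (-π) π ⊆
        {θ : ℝ | 1 + Real.tan c * Real.cos (α * θ) ≤ A * (1 + Real.cos θ) ^ α} := by
      intro θ hθ
      have hθ' : |θ| < π := abs_lt.2 hθ
      have h1 := cos_rpow_mul_le hq1 hq2 (u := |θ| / 2) (by positivity) (by linarith)
      have hcu : 0 < Real.cos (|θ| / 2) :=
        Real.cos_pos_of_mem_Ioo ⟨by linarith [abs_nonneg θ, pi_pos], by linarith⟩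
      have h2 : 1 + Real.cos θ = 2 * Real.cos (|θ| / 2) ^ 2 := by
        rw [Real.cos_sq, ← Real.cos_abs θ]; ring_nf
      have h3 : Real.cos (q * (|θ| / 2)) = Real.cos (α * θ) := by
        rw [← Real.cos_abs (α * θ), abs_mul, abs_of_pos hα0, hα]; ring_nf
      have hpow {x : ℝ} (hx : 0 < x) : (2 * x ^ 2) ^ α = 2 ^ α * x ^ q := by
        rw [Real.mul_rpow two_pos.le (by positivity), ← Real.rpow_natCast_mul hx.le, hα]
        congr 2; push_cast; ring
      change 1 + Real.tan c * Real.cos (α * θ) ≤ A * (1 + Real.cos θ) ^ α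
      rw [← hc, h3] at h1
      calc 1 + Real.tan c * Real.cos (α * θ)
          = A * (2 ^ α * (Real.cos c ^ q * (1 + Real.tan c * Real.cos (α * θ)))) := by
            rw [← mul_assoc (2 ^ α), ← hpow hcc, ← mul_assoc, hAinv, one_mul]
        _ ≤ A * (2 ^ α * Real.cos (|θ| / 2) ^ q) := by gcongr
        _ = _ := by rw [h2, hpow hcu]
    intro θ hθ
    have := hcl.closure_subset_iff.2 hsub
    rw [closure_Ioo (by linarith [pi_pos])] at this
    exact this (abs_le.1 hθ)
  refine ⟨Real.tan c * 2 ^ α, by positivity, fun z w => ?_⟩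
  set R := ‖z‖ ^ 2 + ‖w‖ ^ 2 with hR
  set S := 2 * ‖z * w‖ with hS
  set θ := (z * w).arg with hθ
  have hR0 : 0 ≤ R := by positivity
  have hSR : S ≤ R := by
    rw [hS, hR, norm_mul]; nlinarith [sq_nonneg (‖z‖ - ‖w‖)]
  have hf : ‖z + starRingEnd ℂ w‖ ^ q = (R + S * Real.cos θ) ^ α := by
    have h1 : ‖z + starRingEnd ℂ w‖ ^ 2 = R + S * Real.cos θ := by
      rw [hS, mul_assoc, hθ, Complex.norm_mul_cos_arg, ← Complex.normSq_eq_norm_sq,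
        Complex.normSq_add, Complex.conj_conj, Complex.normSq_conj, Complex.normSq_eq_norm_sq,
        Complex.normSq_eq_norm_sq]
    rw [← h1, ← Real.rpow_natCast_mul (norm_nonneg _), hα]
    congr 1; push_cast; ring
  have hre : Real.tan c * 2 ^ α * rePow α (z * w) = Real.tan c * S ^ α * Real.cos (α * θ) := by
    rw [rePow, hS, Real.mul_rpow two_pos.le (norm_nonneg _)]; ring
  rw [hf, hre]
  rcases (show 0 ≤ S by positivity).eq_or_lt with hS0 | hS0
  · rw [← hS0, Real.zero_rpow hα0.ne']
    simp only [zero_mul, add_zero, mul_zero, sub_zero]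
    exact le_mul_of_one_le_left (by positivity) hAone
  · have h1 := mul_add_rpow_sub_rpow_mono hα0 (by linarith) hA1 hA0.le
      (Real.neg_one_le_cos θ) (Real.cos_le_one θ) ((one_le_div hS0).2 hSR)
    have h2 := hcirc θ (Complex.abs_arg_le_pi _)
    have h3 : R ^ α = S ^ α * (R / S) ^ α := by
      rw [← Real.mul_rpow hS0.le (by positivity), mul_div_cancel₀ _ hS0.ne']
    have h4 : (R + S * Real.cos θ) ^ α = S ^ α * (R / S + Real.cos θ) ^ α := by
      rw [← Real.mul_rpow hS0.le, mul_add, mul_div_cancel₀ _ hS0.ne']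
      have := (one_le_div hS0).2 hSR
      linarith [Real.neg_one_le_cos θ]
    rw [h3, h4]
    have h5 : (R / S) ^ α ≤ A * (R / S + Real.cos θ) ^ α - Real.tan c * Real.cos (α * θ) := by
      linarith
    have := mul_le_mul_of_nonneg_left h5 (Real.rpow_nonneg hS0.le α)
    linarith

theorem DiffContOnCl.harmonic_fejer_riesz {h g : ℂ → ℂ} {q : ℝ} (hq1 : 1 < q) (hq2 : q < 2)
    (hh : DiffContOnCl ℂ h (Metric.ball 0 1)) (hg : DiffContOnCl ℂ g (Metric.ball 0 1))
    (hg0 : g 0 = 0) :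
    (∫ x in (-1:ℝ)..1, ‖h x + starRingEnd ℂ (g x)‖ ^ q) ≤
      (1 / 2) * (Real.cos (π / (2 * q)))⁻¹ ^ q * ∫ θ in (0:ℝ)..(2 * π),
        ‖h (Complex.exp (θ * Complex.I)) + starRingEnd ℂ (g (Complex.exp (θ * Complex.I)))‖ ^ q := by
  have hq0 : 0 < q := by linarith
  obtain ⟨B, hB, hpt⟩ := exists_norm_sq_add_norm_sq_rpow_le hq1 hq2
  set H : ℂ → EuclideanSpace ℂ (Fin 2) := fun z =>
    h z • EuclideanSpace.single 0 (1:ℂ) + g z • EuclideanSpace.single 1 (1:ℂ) with hH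
  have hHd : DiffContOnCl ℂ H (Metric.ball 0 1) := (hh.smul_const _).add (hg.smul_const _)
  have hHn (z : ℂ) : ‖H z‖ ^ q = (‖h z‖ ^ 2 + ‖g z‖ ^ 2) ^ (q / 2) := by
    have h1 : ‖H z‖ ^ 2 = ‖h z‖ ^ 2 + ‖g z‖ ^ 2 := by
      rw [EuclideanSpace.norm_sq_eq, Fin.sum_univ_two]
      simp [hH]
    rw [← h1, ← Real.rpow_natCast_mul (norm_nonneg _)]
    congr 1; push_cast; ring
  have hFR := hHd.fejer_riesz_rpow hq0
  have hsub : Metric.sphere (0:ℂ) 1 ⊆ Metric.closedBall 0 1 := Metric.sphere_subset_closedBall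
  have hmem (θ : ℝ) : Complex.exp (θ * Complex.I) ∈ Metric.sphere (0:ℂ) 1 := by
    simp [Complex.norm_exp_ofReal_mul_I]
  have hcirc {E : Type} [TopologicalSpace E] {k : ℂ → E}
      (hk : ContinuousOn k (Metric.closedBall 0 1)) :
      Continuous fun θ : ℝ => k (Complex.exp (θ * Complex.I)) :=
    (hk.mono hsub).comp_continuous (by fun_prop) hmem
  have hseg {E : Type} [TopologicalSpace E] {k : ℂ → E}
      (hk : ContinuousOn k (Metric.closedBall 0 1)) :
      ContinuousOn (fun x : ℝ => k x) (Set.uIcc (-1) 1) := by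
    refine hk.comp Complex.continuous_ofReal.continuousOn fun x hx => ?_
    rw [Set.uIcc_of_le (by norm_num)] at hx
    simpa using abs_le.2 hx
  have hfc : ContinuousOn (fun z => ‖h z + starRingEnd ℂ (g z)‖ ^ q) (Metric.closedBall 0 1) :=
    (hh.continuousOn_ball.add (Complex.continuous_conj.comp_continuousOn
      hg.continuousOn_ball)).norm.rpow_const fun _ _ => Or.inr hq0.le
  have hHc : ContinuousOn (fun z => ‖H z‖ ^ q) (Metric.closedBall 0 1) :=
    hHd.continuousOn_ball.norm.rpow_const fun _ _ => Or.inr hq0.le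
  have hΦc : ContinuousOn (fun z => rePow (q / 2) (h z * g z)) (Metric.closedBall 0 1) :=
    (continuous_rePow (by linarith)).comp_continuousOn
      (hh.continuousOn_ball.mul hg.continuousOn_ball)
  have hk : DiffContOnCl ℂ (fun z => h z * g z) (Metric.ball 0 1) := by
    simpa [smul_eq_mul] using hh.smul hg
  have hΦ := hk.integral_rePow_nonneg (α := q / 2) (by linarith) (by linarith) (by simp [hg0])
  set A := (2 * Real.cos (π / (2 * q)) ^ 2) ^ (-(q / 2)) with hA
  have hleft : (∫ x in (-1:ℝ)..1, ‖h x + starRingEnd ℂ (g x)‖ ^ q) ≤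
      2 ^ (q / 2) * ∫ x in (-1:ℝ)..1, ‖H x‖ ^ q := by
    rw [← intervalIntegral.integral_const_mul]
    refine intervalIntegral.integral_mono_on (by norm_num) (hseg hfc).intervalIntegrable
      ((hseg hHc).intervalIntegrable.const_mul _) fun x _ => ?_
    rw [hHn, ← Real.mul_rpow two_pos.le (by positivity)]
    have h1 : ‖h x + starRingEnd ℂ (g x)‖ ≤ ‖h x‖ + ‖g x‖ := by
      simpa using norm_add_le (h x) (starRingEnd ℂ (g x))
    calc ‖h x + starRingEnd ℂ (g x)‖ ^ q = (‖h x + starRingEnd ℂ (g x)‖ ^ 2) ^ (q / 2) := by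
          rw [← Real.rpow_natCast_mul (norm_nonneg _)]
          congr 1; push_cast; ring
      _ ≤ _ := by
          refine Real.rpow_le_rpow (by positivity) ?_ (by positivity)
          nlinarith [sq_nonneg (‖h x‖ - ‖g x‖), norm_nonneg (h x + starRingEnd ℂ (g x))]
  have hright : (∫ θ in (0:ℝ)..(2 * π), ‖H (Complex.exp (θ * Complex.I))‖ ^ q) ≤
      A * ∫ θ in (0:ℝ)..(2 * π), ‖h (Complex.exp (θ * Complex.I)) +
        starRingEnd ℂ (g (Complex.exp (θ * Complex.I)))‖ ^ q := by
    have h1 : (∫ θ in (0:ℝ)..(2 * π), ‖H (Complex.exp (θ * Complex.I))‖ ^ q) ≤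
        ∫ θ in (0:ℝ)..(2 * π), (A * ‖h (Complex.exp (θ * Complex.I)) +
          starRingEnd ℂ (g (Complex.exp (θ * Complex.I)))‖ ^ q - B * rePow (q / 2)
            (h (Complex.exp (θ * Complex.I)) * g (Complex.exp (θ * Complex.I)))) := by
      refine intervalIntegral.integral_mono_on two_pi_pos.le ((hcirc hHc).intervalIntegrable _ _)
        (((hcirc hfc).intervalIntegrable _ _).const_mul A |>.sub
          (((hcirc hΦc).intervalIntegrable _ _).const_mul B)) fun θ _ => ?_
      rw [hHn]
      exact hpt _ _
    rw [intervalIntegral.integral_sub (((hcirc hfc).intervalIntegrable _ _).const_mul A)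
      (((hcirc hΦc).intervalIntegrable _ _).const_mul B), intervalIntegral.integral_const_mul,
      intervalIntegral.integral_const_mul] at h1
    nlinarith [mul_nonneg hB hΦ]
  have hcc : 0 ≤ Real.cos (π / (2 * q)) := by
    refine Real.cos_nonneg_of_mem_Icc ⟨by linarith [pi_pos, show 0 < π / (2 * q) by positivity], ?_⟩
    rw [div_le_div_iff₀ (by positivity) two_pos]
    nlinarith [pi_pos]
  have hconst : (2:ℝ) ^ (q / 2) * A = (Real.cos (π / (2 * q)))⁻¹ ^ q := by
    rw [hA, Real.mul_rpow two_pos.le (by positivity), ← mul_assoc, ← Real.rpow_add two_pos,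
      add_neg_cancel, Real.rpow_zero, one_mul, ← Real.rpow_natCast_mul hcc, Real.inv_rpow hcc,
      ← Real.rpow_neg hcc]
    congr 1; push_cast; ring
  rw [← hconst]
  have h2 : (0:ℝ) < 2 ^ (q / 2) := by positivity
  calc _ ≤ _ := hleft
    _ ≤ 2 ^ (q / 2) * (1 / 2 * (A * _)) := by gcongr; exact hFR.trans (by gcongr)
    _ = _ := by ring

theorem integral_norm_rpow_segment_le {h g f : ℂ → ℂ} {q r : ℝ} (hq1 : 1 < q) (hq2 : q < 2)
    (hh : DifferentiableOn ℂ h (Metric.ball 0 1)) (hg : DifferentiableOn ℂ g (Metric.ball 0 1))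
    (hg0 : g 0 = 0) (hf : ∀ z ∈ Metric.ball (0:ℂ) 1, f z = h z + starRingEnd ℂ (g z))
    (hr0 : 0 < r) (hr1 : r < 1) (t : ℝ) :
    (∫ x in (-r)..r, ‖f ((x : ℂ) * Complex.exp (t * Complex.I))‖ ^ q) ≤
      (1 / 2) * (Real.cos (π / (2 * q)))⁻¹ ^ q *
        ∫ θ in (0:ℝ)..(2 * π), ‖f ((r : ℂ) * Complex.exp (θ * Complex.I))‖ ^ q := by
  set c : ℂ := (r : ℂ) * Complex.exp (t * Complex.I) with hc
  have hcn : ‖c‖ = r := by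
    rw [hc, norm_mul, Complex.norm_exp_ofReal_mul_I, Complex.norm_real, Real.norm_of_nonneg hr0.le,
      mul_one]
  have hmaps : ∀ z ∈ Metric.closedBall (0:ℂ) 1, c * z ∈ Metric.ball (0:ℂ) 1 := by
    intro z hz
    rw [mem_closedBall_zero_iff] at hz
    rw [mem_ball_zero_iff, norm_mul, hcn]
    nlinarith [norm_nonneg z]
  have hdc {k : ℂ → ℂ} (hk : DifferentiableOn ℂ k (Metric.ball 0 1)) :
      DiffContOnCl ℂ (fun z => k (c * z)) (Metric.ball 0 1) := by
    apply DifferentiableOn.diffContOnCl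
    rw [closure_ball _ one_ne_zero]
    exact hk.comp (by fun_prop) hmaps
  have key := (hdc hh).harmonic_fejer_riesz hq1 hq2 (hdc hg) (by simpa using hg0)
  have hL : (∫ x in (-1:ℝ)..1, ‖h (c * x) + starRingEnd ℂ (g (c * x))‖ ^ q) =
      r⁻¹ * ∫ x in (-r)..r, ‖f ((x : ℂ) * Complex.exp (t * Complex.I))‖ ^ q := by
    have h1 := intervalIntegral.integral_comp_mul_left (a := -1) (b := 1)
      (fun x : ℝ => ‖f ((x : ℂ) * Complex.exp (t * Complex.I))‖ ^ q) hr0.ne'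
    rw [mul_neg, mul_one, smul_eq_mul] at h1
    rw [← h1]
    refine intervalIntegral.integral_congr fun x hx => ?_
    rw [Set.uIcc_of_le (by norm_num)] at hx
    have hx' : (x : ℂ) ∈ Metric.closedBall (0:ℂ) 1 := by simpa using abs_le.2 hx
    rw [← hf _ (hmaps _ hx'), hc]
    push_cast
    ring_nf
  have hR : (∫ θ in (0:ℝ)..(2 * π), ‖h (c * Complex.exp (θ * Complex.I)) +
        starRingEnd ℂ (g (c * Complex.exp (θ * Complex.I)))‖ ^ q) =
      ∫ θ in (0:ℝ)..(2 * π), ‖f ((r : ℂ) * Complex.exp (θ * Complex.I))‖ ^ q := by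
    have hper : Function.Periodic
        (fun θ : ℝ => ‖f ((r : ℂ) * Complex.exp (θ * Complex.I))‖ ^ q) (2 * π) := by
      intro θ
      simp [add_mul, Complex.exp_add, Complex.exp_two_pi_mul_I]
    have h1 := hper.intervalIntegral_add_eq t 0
    rw [zero_add] at h1
    rw [← h1, add_comm t]
    have h2 := intervalIntegral.integral_comp_add_right (a := 0) (b := 2 * π)
      (fun θ : ℝ => ‖f ((r : ℂ) * Complex.exp (θ * Complex.I))‖ ^ q) t
    rw [zero_add] at h2
    rw [← h2]
    refine intervalIntegral.integral_congr fun θ _ => ?_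
    rw [← hf _ (hmaps _ (by simp [Complex.norm_exp_ofReal_mul_I])), hc, mul_assoc,
      ← Complex.exp_add]
    push_cast
    ring_nf
  rw [hL, hR] at key
  refine le_trans ?_ key
  refine le_mul_of_one_le_left (intervalIntegral.integral_nonneg (by linarith) fun x _ => ?_)
    ((one_le_inv₀ hr0).2 hr1.le)
  positivity

section Limits

variable {Ω : Type*} [MeasurableSpace Ω] {μ : Measure Ω}

theorem rpow_le_one_add_rpow {y p q : ℝ} (hy : 0 ≤ y) (hq : 0 ≤ q) (hqp : q ≤ p) :
    y ^ q ≤ 1 + y ^ p := by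
  rcases le_total y 1 with h | h
  · linarith [Real.rpow_le_one hy h hq, Real.rpow_nonneg hy p]
  · linarith [Real.rpow_le_rpow_of_exponent_le h hqp]

theorem aestronglyMeasurable_of_rpow {Y : Ω → ℝ} (hY : ∀ x, 0 ≤ Y x) {p : ℝ} (hp : 0 < p)
    (h : AEStronglyMeasurable (fun x => Y x ^ p) μ) : AEStronglyMeasurable Y μ := by
  have h1 := (Real.continuous_rpow_const (inv_nonneg.2 hp.le)).comp_aestronglyMeasurable h
  refine h1.congr (Eventually.of_forall fun x => ?_)
  simp [Real.rpow_rpow_inv (hY x) hp.ne']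

variable [IsFiniteMeasure μ]

theorem integrable_rpow_of_le {Y : Ω → ℝ} (hY : ∀ x, 0 ≤ Y x) {p q : ℝ} (hq : 0 < q) (hqp : q ≤ p)
    (h : Integrable (fun x => Y x ^ p) μ) : Integrable (fun x => Y x ^ q) μ := by
  refine ((integrable_const 1).add h).mono'
    ((Real.continuous_rpow_const hq.le).comp_aestronglyMeasurable
      (aestronglyMeasurable_of_rpow hY (hq.trans_le hqp) h.aestronglyMeasurable))
    (Eventually.of_forall fun x => ?_)
  rw [Real.norm_of_nonneg (Real.rpow_nonneg (hY x) _)]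
  exact rpow_le_one_add_rpow (hY x) hq.le hqp

theorem tendsto_integral_rpow_left {Y : Ω → ℝ} (hY : ∀ x, 0 ≤ Y x) {p : ℝ} (hp : 0 < p)
    (h : Integrable (fun x => Y x ^ p) μ) :
    Tendsto (fun q : ℝ => ∫ x, Y x ^ q ∂μ) (nhdsWithin p (Set.Iio p)) (nhds (∫ x, Y x ^ p ∂μ)) := by
  have hpos : ∀ᶠ q : ℝ in nhdsWithin p (Set.Iio p), 0 < q ∧ q < p := by
    filter_upwards [nhdsWithin_le_nhds (lt_mem_nhds hp), self_mem_nhdsWithin] with q h1 h2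
    exact ⟨h1, h2⟩
  refine tendsto_integral_filter_of_dominated_convergence (fun x => 1 + Y x ^ p) ?_ ?_
    ((integrable_const 1).add h) (Eventually.of_forall fun x => ?_)
  · filter_upwards [hpos] with q hq
    exact (integrable_rpow_of_le hY hq.1 hq.2.le h).aestronglyMeasurable
  · filter_upwards [hpos] with q hq
    refine Eventually.of_forall fun x => ?_
    rw [Real.norm_of_nonneg (Real.rpow_nonneg (hY x) _)]
    exact rpow_le_one_add_rpow (hY x) hq.1.le hq.2.le
  · exact (Real.continuousAt_const_rpow' hp.ne').tendsto.mono_left nhdsWithin_le_nhds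

theorem rpow_le_min_rpow_add {y N p q : ℝ} (hy : 0 ≤ y) (hN : 0 < N) (hqp : q < p) :
    y ^ q ≤ min y N ^ q + N ^ (q - p) * y ^ p := by
  rcases le_total y N with h | h
  · rw [min_eq_left h]
    exact le_add_of_nonneg_right (by positivity)
  · have hy0 : 0 < y := hN.trans_le h
    have h1 : y ^ q = y ^ (q - p) * y ^ p := by rw [← Real.rpow_add hy0]; ring_nf
    have h2 : y ^ (q - p) ≤ N ^ (q - p) :=
      Real.rpow_le_rpow_of_nonpos hN h (by linarith)
    rw [h1]
    have : 0 ≤ min y N ^ q := Real.rpow_nonneg (le_min hy hN.le) _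
    nlinarith [Real.rpow_nonneg hy p]

/-- Passage to the limit in `L^q`, `q < p`, for sequences bounded in `L^p`. -/
theorem le_integral_rpow_of_tendsto_ae {X : ℕ → Ω → ℝ} {Y : Ω → ℝ} {p q C l : ℝ}
    (hX : ∀ n x, 0 ≤ X n x) (hY : ∀ x, 0 ≤ Y x) (hq : 0 < q) (hqp : q < p)
    (hXi : ∀ n, Integrable (fun x => X n x ^ p) μ) (hYi : Integrable (fun x => Y x ^ p) μ)
    (hC : ∀ n, ∫ x, X n x ^ p ∂μ ≤ C)
    (hlim : ∀ᵐ x ∂μ, Tendsto (fun n => X n x) atTop (nhds (Y x)))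
    (hl : ∀ᶠ n in atTop, l ≤ ∫ x, X n x ^ q ∂μ) : l ≤ ∫ x, Y x ^ q ∂μ := by
  have hp : 0 < p := hq.trans hqp
  have hXm (n : ℕ) := aestronglyMeasurable_of_rpow (hX n) hp (hXi n).aestronglyMeasurable
  have hYm := aestronglyMeasurable_of_rpow hY hp hYi.aestronglyMeasurable
  have hcont (N : ℝ) : Continuous fun y : ℝ => min y N ^ q :=
    (continuous_id.min continuous_const).rpow_const fun _ => Or.inr hq.le
  have hmin {y N : ℝ} (hy : 0 ≤ y) (hN : 0 < N) : ‖min y N ^ q‖ ≤ N ^ q := by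
    have h0 := le_min hy hN.le
    rw [Real.norm_of_nonneg (Real.rpow_nonneg h0 _)]
    exact Real.rpow_le_rpow h0 (min_le_right _ _) hq.le
  have hminInt {Z : Ω → ℝ} (hZ : ∀ x, 0 ≤ Z x) (hZm : AEStronglyMeasurable Z μ) {N : ℝ} (hN : 0 < N) :
      Integrable (fun x => min (Z x) N ^ q) μ :=
    (integrable_const (N ^ q)).mono' ((hcont N).comp_aestronglyMeasurable hZm)
      (Eventually.of_forall fun x => hmin (hZ x) hN)
  have hbound (N : ℝ) (hN : 0 < N) : l ≤ (∫ x, Y x ^ q ∂μ) + N ^ (q - p) * C := by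
    have h1 : Tendsto (fun n => (∫ x, min (X n x) N ^ q ∂μ) + N ^ (q - p) * C) atTop
        (nhds ((∫ x, min (Y x) N ^ q ∂μ) + N ^ (q - p) * C)) := by
      refine Tendsto.add_const _ (tendsto_integral_of_dominated_convergence (fun _ => N ^ q)
        (fun n => (hminInt (hX n) (hXm n) hN).aestronglyMeasurable) (integrable_const _)
        (fun n => Eventually.of_forall fun x => hmin (hX n x) hN) ?_)
      filter_upwards [hlim] with x hx
      exact ((hcont N).tendsto _).comp hx
    have h2 := ge_of_tendsto h1 (b := l) (by
      filter_upwards [hl] with n hn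
      refine hn.trans ?_
      calc ∫ x, X n x ^ q ∂μ ≤ ∫ x, (min (X n x) N ^ q + N ^ (q - p) * X n x ^ p) ∂μ :=
            integral_mono (integrable_rpow_of_le (hX n) hq hqp.le (hXi n))
              ((hminInt (hX n) (hXm n) hN).add ((hXi n).const_mul _))
              fun x => rpow_le_min_rpow_add (hX n x) hN hqp
        _ = (∫ x, min (X n x) N ^ q ∂μ) + N ^ (q - p) * ∫ x, X n x ^ p ∂μ := by
            rw [integral_add (hminInt (hX n) (hXm n) hN) ((hXi n).const_mul _), integral_const_mul]
        _ ≤ _ := by gcongr; exact hC n)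
    refine h2.trans ?_
    gcongr ?_ + _
    refine integral_mono (hminInt hY hYm hN) (integrable_rpow_of_le hY hq hqp.le hYi) fun x => ?_
    exact Real.rpow_le_rpow (le_min (hY x) hN.le) (min_le_left _ _) hq.le
  have h3 : Tendsto (fun N : ℝ => (∫ x, Y x ^ q ∂μ) + N ^ (q - p) * C) atTop
      (nhds ((∫ x, Y x ^ q ∂μ) + 0 * C)) := by
    have := tendsto_rpow_neg_atTop (sub_pos.2 hqp)
    rw [neg_sub] at this
    exact (this.mul_const C).const_add _
  have := ge_of_tendsto h3 (by filter_upwards [eventually_gt_atTop 0] with N hN using hbound N hN)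
  simpa using this

end Limits

theorem integral_le_of_forall_symm_subinterval_le {φ : ℝ → ℝ} {b : ℝ} (hφ : ∀ x, 0 ≤ φ x)
    (h : ∀ ρ : ℝ, 0 < ρ → ρ < 1 → ∫ x in (-ρ)..ρ, φ x ≤ b) : ∫ x in (-1:ℝ)..1, φ x ≤ b := by
  by_cases hi : IntervalIntegrable φ volume (-1) 1
  · have hc := intervalIntegral.continuousOn_primitive_interval' hi Set.left_mem_uIcc
    rw [Set.uIcc_of_le (by norm_num)] at hc
    have hIoo : Set.Ioo (0:ℝ) 1 ∈ nhdsWithin (1:ℝ) (Set.Iio 1) :=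
      Ioo_mem_nhdsLT one_pos
    have h1 : Tendsto (fun ρ : ℝ => ρ) (nhdsWithin 1 (Set.Iio 1))
        (nhdsWithin 1 (Set.Icc (-1) 1)) := by
      refine tendsto_nhdsWithin_iff.2 ⟨tendsto_id.mono_left nhdsWithin_le_nhds, ?_⟩
      filter_upwards [hIoo] with ρ hρ
      exact ⟨by linarith [hρ.1], hρ.2.le⟩
    have h2 : Tendsto (fun ρ : ℝ => -ρ) (nhdsWithin 1 (Set.Iio 1))
        (nhdsWithin (-1) (Set.Icc (-1) 1)) := by
      refine tendsto_nhdsWithin_iff.2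
        ⟨(continuous_neg.tendsto 1).mono_left nhdsWithin_le_nhds, ?_⟩
      filter_upwards [hIoo] with ρ hρ
      exact ⟨by linarith [hρ.2], by linarith [hρ.1]⟩
    have h3 := ((hc 1 (by norm_num)).tendsto.comp h1).sub ((hc (-1) (by norm_num)).tendsto.comp h2)
    rw [intervalIntegral.integral_same, sub_zero] at h3
    refine le_of_tendsto h3 ?_
    filter_upwards [hIoo] with ρ hρ
    have hsub {c : ℝ} (hc : c ∈ Set.Icc (-1:ℝ) 1) : IntervalIntegrable φ volume (-1) c :=
      hi.mono_set (by
        rw [Set.uIcc_of_le hc.1, Set.uIcc_of_le (by norm_num)]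
        exact Set.Icc_subset_Icc_right hc.2)
    simp only [Function.comp]
    rw [intervalIntegral.integral_interval_sub_left
      (hsub ⟨by linarith [hρ.1], hρ.2.le⟩) (hsub ⟨by linarith [hρ.2], by linarith [hρ.1]⟩)]
    exact h ρ hρ.1 hρ.2
  · rw [intervalIntegral.integral_undef hi]
    exact (intervalIntegral.integral_nonneg (by norm_num) fun x _ => hφ x).trans
      (h (1 / 2) (by norm_num) (by norm_num))

/-- **Harmonic Riesz–Fejér inequality, `1 < p ≤ 2`.** If `f = h + conj g` is harmonic on the
unit disk (`h, g` analytic, `g 0 = 0`), belongs to the harmonic Hardy space `h^p`, and has a.e.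
radial boundary values `F`, then for all real `t`,
`∫_{-1}^{1} |f(x e^{it})|^p dx ≤ (1/2) sec^p (π/(2p)) ∫₀^{2π} |F(θ)|^p dθ`. -/
theorem harmonic_riesz_fejer_small_p (p : ℝ) (hp1 : 1 < p) (hp2 : p ≤ 2)
    (h g f : ℂ → ℂ) (F : ℝ → ℂ)
    (hh : AnalyticOn ℂ h (Metric.ball 0 1)) (hg : AnalyticOn ℂ g (Metric.ball 0 1))
    (hg0 : g 0 = 0) (hf : ∀ z ∈ Metric.ball (0:ℂ) 1, f z = h z + starRingEnd ℂ (g z))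
    (hHp : ∃ C : ℝ, ∀ r : ℝ, 0 ≤ r → r < 1 →
      (∫ θ in (0:ℝ)..(2 * π), ‖f ((r : ℂ) * Complex.exp (θ * Complex.I))‖ ^ p) ≤ C)
    (hF : ∀ᵐ θ : ℝ, Tendsto (fun r : ℝ => f ((r : ℂ) * Complex.exp (θ * Complex.I)))
      (nhdsWithin 1 (Set.Iio 1)) (nhds (F θ))) (t : ℝ) :
    (∫ x in (-1:ℝ)..1, ‖f ((x : ℂ) * Complex.exp (t * Complex.I))‖ ^ p) ≤
      (1 / 2) * (Real.cos (π / (2 * p)))⁻¹ ^ p * ∫ θ in (0:ℝ)..(2 * π), ‖F θ‖ ^ p := by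
  have hp0 : 0 < p := by linarith
  have hhd := hh.differentiableOn
  have hgd := hg.differentiableOn
  have hfc : ContinuousOn f (Metric.ball 0 1) :=
    (hhd.continuousOn.add (Complex.continuous_conj.comp_continuousOn hgd.continuousOn)).congr
      fun z hz => hf z hz
  obtain ⟨C, hC⟩ := hHp
  set r : ℕ → ℝ := fun n => 1 - 1 / ((n : ℝ) + 2) with hr
  have hr0 (n : ℕ) : 0 < r n := by
    have : (1:ℝ) / ((n : ℝ) + 2) < 1 := by
      rw [div_lt_one (by positivity)]
      linarith [n.cast_nonneg (α := ℝ)]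
    linarith
  have hr1 (n : ℕ) : r n < 1 := by
    have : (0:ℝ) < 1 / ((n : ℝ) + 2) := by positivity
    linarith
  have hrt : Tendsto r atTop (nhds 1) := by
    have h1 : Tendsto (fun n : ℕ => (1:ℝ) / ((n : ℝ) + 2)) atTop (nhds 0) :=
      tendsto_const_nhds.div_atTop
        (tendsto_atTop_add_const_right _ _ tendsto_natCast_atTop_atTop)
    simpa only [sub_zero] using h1.const_sub 1
  have hrt' : Tendsto r atTop (nhdsWithin 1 (Set.Iio 1)) :=
    tendsto_nhdsWithin_iff.2 ⟨hrt, Eventually.of_forall hr1⟩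
  have hXc (n : ℕ) : Continuous fun θ : ℝ => ‖f ((r n : ℂ) * Complex.exp (θ * Complex.I))‖ := by
    refine (hfc.comp_continuous (by fun_prop) fun θ => ?_).norm
    rw [mem_ball_zero_iff, norm_mul, Complex.norm_exp_ofReal_mul_I, Complex.norm_real,
      Real.norm_of_nonneg (hr0 n).le, mul_one]
    exact hr1 n
  have hXi {q : ℝ} (hq : 0 < q) (n : ℕ) : Integrable
      (fun θ : ℝ => ‖f ((r n : ℂ) * Complex.exp (θ * Complex.I))‖ ^ q)
      (volume.restrict (Set.Ioc 0 (2 * π))) :=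
    ((hXc n).rpow_const fun _ => Or.inr hq.le).integrableOn_Ioc
  have hXC (n : ℕ) : ∫ θ : ℝ in Set.Ioc 0 (2 * π),
      ‖f ((r n : ℂ) * Complex.exp (θ * Complex.I))‖ ^ p ≤ C := by
    rw [← intervalIntegral.integral_of_le two_pi_pos.le]
    exact hC _ (hr0 n).le (hr1 n)
  have hlim : ∀ᵐ θ : ℝ ∂volume.restrict (Set.Ioc 0 (2 * π)), Tendsto
      (fun n => ‖f ((r n : ℂ) * Complex.exp (θ * Complex.I))‖) atTop (nhds ‖F θ‖) := by
    filter_upwards [ae_restrict_of_ae hF] with θ hθ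
    exact (hθ.comp hrt').norm
  have hYi : Integrable (fun θ => ‖F θ‖ ^ p) (volume.restrict (Set.Ioc 0 (2 * π))) := by
    refine integrable_of_tendsto
      (G := fun n θ => ‖f ((r n : ℂ) * Complex.exp ((θ : ℝ) * Complex.I))‖ ^ p) ?_
      (fun n => (hXi hp0 n).aestronglyMeasurable) ?_
    · filter_upwards [hlim] with θ hθ
      exact hθ.rpow_const (Or.inr hp0.le)
    · refine ne_top_of_le_ne_top (ENNReal.ofReal_ne_top (r := C)) ?_
      refine liminf_le_of_frequently_le' (Frequently.of_forall fun n => ?_)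
      rw [← ofReal_integral_norm_eq_lintegral_enorm (hXi hp0 n)]
      refine ENNReal.ofReal_le_ofReal (le_of_eq_of_le (integral_congr_ae ?_) (hXC n))
      refine Eventually.of_forall fun θ => ?_
      exact Real.norm_of_nonneg (Real.rpow_nonneg (norm_nonneg _) _)
  have hcos {q : ℝ} (hq : 1 < q) : 0 < Real.cos (π / (2 * q)) := by
    refine Real.cos_pos_of_mem_Ioo
      ⟨by linarith [pi_pos, show 0 < π / (2 * q) by positivity], ?_⟩
    rw [div_lt_div_iff₀ (by positivity) two_pos]
    nlinarith [pi_pos]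
  have hsegc {ρ q : ℝ} (hρ0 : 0 < ρ) (hρ1 : ρ < 1) (hq : 0 < q) : IntervalIntegrable
      (fun x : ℝ => ‖f ((x : ℂ) * Complex.exp (t * Complex.I))‖ ^ q) volume (-ρ) ρ := by
    refine ContinuousOn.intervalIntegrable (ContinuousOn.rpow_const (ContinuousOn.norm
      (hfc.comp (by fun_prop) fun x hx => ?_)) fun _ _ => Or.inr hq.le)
    rw [Set.uIcc_of_le (by linarith)] at hx
    rw [mem_ball_zero_iff, norm_mul, Complex.norm_exp_ofReal_mul_I, Complex.norm_real, mul_one]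
    exact (abs_le.2 hx).trans_lt hρ1
  refine integral_le_of_forall_symm_subinterval_le
    (fun x => Real.rpow_nonneg (norm_nonneg _) _) fun ρ hρ0 hρ1 => ?_
  rw [intervalIntegral.integral_of_le two_pi_pos.le]
  have hq {q : ℝ} (hq1 : 1 < q) (hqp : q < p) :
      (∫ x in (-ρ)..ρ, ‖f ((x : ℂ) * Complex.exp (t * Complex.I))‖ ^ q) ≤
        (1 / 2) * (Real.cos (π / (2 * q)))⁻¹ ^ q *
          ∫ θ in Set.Ioc 0 (2 * π), ‖F θ‖ ^ q := by
    have hq0 : 0 < q := by linarith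
    have hK : 0 < (1 / 2) * (Real.cos (π / (2 * q)))⁻¹ ^ q :=
      mul_pos (by norm_num) (Real.rpow_pos_of_pos (inv_pos.2 (hcos hq1)) _)
    rw [← div_le_iff₀' hK]
    refine le_integral_rpow_of_tendsto_ae (fun n θ => norm_nonneg _) (fun θ => norm_nonneg _)
      hq0 hqp (hXi hp0) hYi hXC hlim ?_
    filter_upwards [hrt.eventually (lt_mem_nhds hρ1)] with n hn
    rw [div_le_iff₀' hK, ← intervalIntegral.integral_of_le two_pi_pos.le]
    refine le_trans ?_ (integral_norm_rpow_segment_le hq1 (hqp.trans_le hp2) hhd hgd hg0 hf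
      (hr0 n) (hr1 n) t)
    exact intervalIntegral.integral_mono_interval (by linarith) (by linarith) hn.le
      (Eventually.of_forall fun x => Real.rpow_nonneg (norm_nonneg _) _)
      (hsegc (hr0 n) (hr1 n) hq0)
  have hright : Tendsto (fun q : ℝ => (1 / 2) * (Real.cos (π / (2 * q)))⁻¹ ^ q *
      ∫ θ in Set.Ioc 0 (2 * π), ‖F θ‖ ^ q) (nhdsWithin p (Set.Iio p))
      (nhds ((1 / 2) * (Real.cos (π / (2 * p)))⁻¹ ^ p *
        ∫ θ in Set.Ioc 0 (2 * π), ‖F θ‖ ^ p)) := by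
    refine Tendsto.mul ?_ (tendsto_integral_rpow_left (fun θ => norm_nonneg _) hp0 hYi)
    have h1 : ContinuousAt (fun q : ℝ => (Real.cos (π / (2 * q)))⁻¹) p :=
      ContinuousAt.inv₀ (Real.continuous_cos.continuousAt.comp
        (continuousAt_const.div (by fun_prop) (by positivity))) (hcos hp1).ne'
    exact ((h1.rpow continuousAt_id (Or.inr hp0)).const_mul _).tendsto.mono_left
      nhdsWithin_le_nhds
  have hleft : Tendsto
      (fun q : ℝ => ∫ x in (-ρ)..ρ, ‖f ((x : ℂ) * Complex.exp (t * Complex.I))‖ ^ q)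
      (nhdsWithin p (Set.Iio p))
      (nhds (∫ x in (-ρ)..ρ, ‖f ((x : ℂ) * Complex.exp (t * Complex.I))‖ ^ p)) := by
    simp only [intervalIntegral.integral_of_le (show -ρ ≤ ρ by linarith)]
    exact tendsto_integral_rpow_left (fun x => norm_nonneg _) hp0 (hsegc hρ0 hρ1 hp0).1
  refine le_of_tendsto_of_tendsto hleft hright ?_
  filter_upwards [nhdsWithin_le_nhds (lt_mem_nhds hp1), self_mem_nhdsWithin] with q h1 h2
  exact hq h1 h2
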